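/- Tightness of the lower bound: if f : [0,1] → ℝ is a continuous function such that for every pair of nonempty finite sets W1, W2 with cosine similarity S and resemblance R we have S² ≤ f(S) ≤ R, then f(c) = c² for every c ∈ [0,1]; in other words, no continuous lower bound on R in terms of S alone can improve on S². -/

import Mathlib

/-!
For nested sets `W₁ ⊆ W₂` the squared cosine similarity and the resemblance are both
`#W₁ / #W₂`, so the two bounds leave no room for `f` at the similarity of a nested pair. Every
rational in `(0, 1]` is such a ratio, so these similarities are dense in `[0, 1]`
and continuity does the rest.
-/

open Set Topology

section Similarity

variable {α : Type*} [DecidableEq α] {W₁ W₂ : Finset α}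

/-- The cosine similarity `S` of two finite sets, that is, of their indicator vectors. It is `0`
when one of the sets is empty. -/
noncomputable def cosineSimilarity (W₁ W₂ : Finset α) : ℝ :=
  ((W₁ ∩ W₂).card : ℝ) / Real.sqrt ((W₁.card : ℝ) * (W₂.card : ℝ))

/-- The resemblance `R` (Jaccard similarity) of two finite sets, with the size of the union
`W₁ ∪ W₂` in place of `f₁ + f₂ - a`. It is `0` when both sets are empty. -/
noncomputable def resemblance (W₁ W₂ : Finset α) : ℝ :=
  ((W₁ ∩ W₂).card : ℝ) / ((W₁ ∪ W₂).card : ℝ)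

theorem cosineSimilarity_mem_Icc (W₁ W₂ : Finset α) : cosineSimilarity W₁ W₂ ∈ Icc 0 1 := by
  have inter_le_sqrt : ((W₁ ∩ W₂).card : ℝ) ≤ √((W₁.card : ℝ) * W₂.card) := by
    refine Real.le_sqrt_of_sq_le ?_
    rw [sq]
    gcongr
    exacts [Finset.inter_subset_left, Finset.inter_subset_right]
  exact ⟨by unfold cosineSimilarity; positivity,
    div_le_one_of_le₀ inter_le_sqrt (Real.sqrt_nonneg _)⟩

theorem cosineSimilarity_of_subset (h : W₁ ⊆ W₂) :
    cosineSimilarity W₁ W₂ = √((W₁.card : ℝ) / W₂.card) := by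
  rw [cosineSimilarity, Finset.inter_eq_left.2 h, Real.sqrt_mul (Nat.cast_nonneg _),
    Real.sqrt_div (Nat.cast_nonneg _), ← div_div, Real.div_sqrt]

theorem resemblance_of_subset (h : W₁ ⊆ W₂) :
    resemblance W₁ W₂ = (W₁.card : ℝ) / W₂.card := by
  rw [resemblance, Finset.inter_eq_left.2 h, Finset.union_eq_right.2 h]

theorem cosineSimilarity_sq_of_subset (h : W₁ ⊆ W₂) :
    cosineSimilarity W₁ W₂ ^ 2 = resemblance W₁ W₂ := by
  rw [cosineSimilarity_of_subset h, resemblance_of_subset h, Real.sq_sqrt (by positivity)]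

end Similarity

theorem exists_subset_card_div_card_eq (α : Type*) [Infinite α] {q : ℚ} (hq : q ∈ Ioc 0 1) :
    ∃ W₁ W₂ : Finset α, W₁.Nonempty ∧ W₁ ⊆ W₂ ∧ (W₁.card : ℝ) / W₂.card = q := by
  obtain ⟨m, hm⟩ := Int.eq_ofNat_of_zero_le (Rat.num_nonneg.2 hq.1.le)
  have hm_pos : 0 < m := by have := Rat.num_pos.2 hq.1; lia
  have hm_le : m ≤ q.den := by have := Rat.num_le_denom_iff.2 hq.2; lia
  obtain ⟨W₂, hW₂⟩ := Infinite.exists_subset_card_eq α q.den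
  obtain ⟨W₁, hsub, hW₁⟩ := Finset.exists_subset_card_eq (hm_le.trans_eq hW₂.symm)
  refine ⟨W₁, W₂, Finset.card_pos.1 (hW₁ ▸ hm_pos), hsub, ?_⟩
  rw [hW₁, hW₂, Rat.cast_def, hm, Int.cast_natCast]

/-- The values of the cosine similarity on nested pairs of nonempty finite subsets of `α`, at which
the two bounds on `f` coincide. -/
def nestedSimilarities (α : Type*) [DecidableEq α] : Set ℝ :=
  {x | ∃ W₁ W₂ : Finset α, W₁.Nonempty ∧ W₁ ⊆ W₂ ∧ cosineSimilarity W₁ W₂ = x}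

theorem nestedSimilarities_subset_Icc (α : Type*) [DecidableEq α] :
    nestedSimilarities α ⊆ Icc 0 1 := by
  rintro _ ⟨W₁, W₂, -, -, rfl⟩
  exact cosineSimilarity_mem_Icc W₁ W₂

theorem sqrt_ratCast_mem_nestedSimilarities (α : Type*) [DecidableEq α] [Infinite α] {q : ℚ}
    (hq : q ∈ Ioc 0 1) : √(q : ℝ) ∈ nestedSimilarities α := by
  obtain ⟨W₁, W₂, hne, hsub, hcard⟩ := exists_subset_card_div_card_eq α hq
  exact ⟨W₁, W₂, hne, hsub, by rw [cosineSimilarity_of_subset hsub, hcard]⟩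

theorem Icc_subset_closure_nestedSimilarities (α : Type*) [DecidableEq α] [Infinite α] :
    Icc 0 1 ⊆ closure (nestedSimilarities α) := by
  intro c hc
  have hsq : c ^ 2 ∈ closure (Ioo 0 1 ∩ range ((↑) : ℚ → ℝ)) := by
    have hc_sq : c ^ 2 ∈ closure (Ioo (0 : ℝ) 1) := by
      rw [closure_Ioo zero_ne_one]
      exact ⟨sq_nonneg c, pow_le_one₀ hc.1 hc.2⟩
    exact closure_minimal (Rat.denseRange_cast.open_subset_closure_inter isOpen_Ioo)
      isClosed_closure hc_sq
  rw [← Real.sqrt_sq hc.1]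
  refine map_mem_closure Real.continuous_sqrt hsq ?_
  rintro _ ⟨hq, q, rfl⟩
  exact sqrt_ratCast_mem_nestedSimilarities α ⟨by exact_mod_cast hq.1, by exact_mod_cast hq.2.le⟩

theorem eq_sq_of_mem_nestedSimilarities {α : Type*} [DecidableEq α] {f : ℝ → ℝ}
    (hbound : ∀ W₁ W₂ : Finset α, W₁.Nonempty → W₁ ⊆ W₂ →
      cosineSimilarity W₁ W₂ ^ 2 ≤ f (cosineSimilarity W₁ W₂) ∧
        f (cosineSimilarity W₁ W₂) ≤ resemblance W₁ W₂)
    {x : ℝ} (hx : x ∈ nestedSimilarities α) : f x = x ^ 2 := by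
  obtain ⟨W₁, W₂, hne, hsub, rfl⟩ := hx
  obtain ⟨hlower, hupper⟩ := hbound W₁ W₂ hne hsub
  exact le_antisymm (hupper.trans_eq (cosineSimilarity_sq_of_subset hsub).symm) hlower

theorem lower_bound_tight_general {α : Type*} [DecidableEq α] [Infinite α] {f : ℝ → ℝ} {c : ℝ}
    (hc : c ∈ Icc 0 1) (hf : ContinuousWithinAt f (Icc 0 1) c)
    (hbound : ∀ W₁ W₂ : Finset α, W₁.Nonempty → W₁ ⊆ W₂ →
      cosineSimilarity W₁ W₂ ^ 2 ≤ f (cosineSimilarity W₁ W₂) ∧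
        f (cosineSimilarity W₁ W₂) ≤ resemblance W₁ W₂) :
    f c = c ^ 2 := by
  have : (𝓝[nestedSimilarities α] c).NeBot :=
    mem_closure_iff_nhdsWithin_neBot.1 (Icc_subset_closure_nestedSimilarities α hc)
  have hf_nested : ContinuousWithinAt f (nestedSimilarities α) c :=
    hf.mono (nestedSimilarities_subset_Icc α)
  have hf_eq : f =ᶠ[𝓝[nestedSimilarities α] c] (· ^ 2) :=
    eventually_mem_nhdsWithin.mono fun _ => eq_sq_of_mem_nestedSimilarities hbound
  exact tendsto_nhds_unique_of_eventuallyEq hf_nested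
    (continuous_pow 2).continuousWithinAt hf_eq

/-- Tightness of the lower bound: any continuous `f` on `[0,1]` with
`S² ≤ f(S) ≤ R` for all pairs of nonempty finite sets must equal `c²` on `[0,1]`. -/
theorem lower_bound_tight (f : ℝ → ℝ) (hf : ContinuousOn f (Set.Icc 0 1))
    (hbound : ∀ W1 W2 : Finset ℕ, W1.Nonempty → W2.Nonempty →
      (((W1 ∩ W2).card : ℝ) / Real.sqrt ((W1.card : ℝ) * (W2.card : ℝ))) ^ 2 ≤
          f (((W1 ∩ W2).card : ℝ) / Real.sqrt ((W1.card : ℝ) * (W2.card : ℝ))) ∧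
        f (((W1 ∩ W2).card : ℝ) / Real.sqrt ((W1.card : ℝ) * (W2.card : ℝ))) ≤
          ((W1 ∩ W2).card : ℝ) / ((W1 ∪ W2).card : ℝ)) :
    ∀ c ∈ Set.Icc (0 : ℝ) 1, f c = c ^ 2 :=
  fun c hc => lower_bound_tight_general hc (hf c hc) fun W₁ W₂ hne hsub =>
    hbound W₁ W₂ hne (hne.mono hsub)
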